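/- Let δ₁(t) = log((sqrt(1-t^2)+1)/t) - sqrt(1-t^2) for t ∈ (0,1). Then δ₁ is strictly decreasing on (0,1), δ₁(t) → ∞ as t → 0⁺, δ₁(1) = 0, and δ₁(t) ~ (2√2/3)(1-t)^{3/2} as t → 1⁻, i.e., lim_{t→1⁻} δ₁(t)/(1-t)^{3/2} = 2√2/3. -/

import Mathlib

open Filter Set

theorem aux_deriv (t : ℝ) (h0 : 0 < t) (h1 : t < 1) :
    HasDerivAt (fun t : ℝ => Real.log ((Real.sqrt (1 - t^2) + 1) / t) - Real.sqrt (1 - t^2))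
      (-(Real.sqrt (1 - t^2) / t)) t := by
  have hp : 0 < 1 - t^2 := by nlinarith
  have hs : 0 < Real.sqrt (1 - t^2) := Real.sqrt_pos.mpr hp
  have hsq : Real.sqrt (1 - t^2) ^ 2 = 1 - t^2 := Real.sq_sqrt hp.le
  have e1 : HasDerivAt (fun t : ℝ => 1 - t^2) (-(2 * t)) t := by
    simpa using ((hasDerivAt_id t).pow 2).const_sub 1
  have e2 := e1.sqrt hp.ne'
  have e3 := (e2.add_const 1).div (hasDerivAt_id t) h0.ne'
  have hne : (Real.sqrt (1 - t^2) + 1) / t ≠ 0 := by positivity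
  have e4 := (e3.log hne).sub e2
  refine e4.congr_deriv ?_
  simp only [id, Pi.div_apply]
  generalize Real.sqrt (1 - t^2) = s at *
  have hs1 : s + 1 ≠ 0 := by positivity
  field_simp
  have : t^2 = 1 - s^2 := by linarith
  ring_nf
  simp only [this]
  ring_nf

/-- Properties of the analyticity-strip width of the 1D Burgers solution with initial
data `sin x`: strictly decreasing on `(0,1)`, tends to `∞` at `0⁺`, vanishes at `1`, and
behaves like `(2√2/3)(1-t)^{3/2}` as `t → 1⁻`. -/
theorem stmt19 (δ₁ : ℝ → ℝ)
    (hδ₁ : ∀ t : ℝ, δ₁ t =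
      Real.log ((Real.sqrt (1 - t^2) + 1) / t) - Real.sqrt (1 - t^2)) :
    StrictAntiOn δ₁ (Set.Ioo 0 1) ∧
    Filter.Tendsto δ₁ (nhdsWithin 0 (Set.Ioi 0)) atTop ∧
    δ₁ 1 = 0 ∧
    Filter.Tendsto (fun t => δ₁ t / (1 - t) ^ ((3:ℝ)/2))
      (nhdsWithin 1 (Set.Iio 1)) (nhds (2 * Real.sqrt 2 / 3)) := by
  have hd : ∀ t : ℝ, 0 < t → t < 1 → HasDerivAt δ₁ (-(Real.sqrt (1 - t^2) / t)) t := by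
    intro t h0 h1
    rw [funext hδ₁]
    exact aux_deriv t h0 h1
  have hone : δ₁ 1 = 0 := by simp [hδ₁]
  have hmem : Ioo (0:ℝ) 1 ∈ nhdsWithin (1:ℝ) (Iio 1) := Ioo_mem_nhdsLT one_pos
  refine ⟨?_, ?_, hone, ?_⟩
  · apply strictAntiOn_of_deriv_neg (convex_Ioo 0 1)
    · intro t ht
      exact (hd t ht.1 ht.2).continuousAt.continuousWithinAt
    · intro t ht
      rw [interior_Ioo] at ht
      rw [(hd t ht.1 ht.2).deriv]
      have hs : 0 < Real.sqrt (1 - t^2) := Real.sqrt_pos.mpr (by nlinarith [ht.1, ht.2])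
      have := div_pos hs ht.1
      linarith
  · have hl : Tendsto (fun t : ℝ => -Real.log t + (-1)) (nhdsWithin 0 (Ioi 0)) atTop :=
      tendsto_atTop_add_const_right _ _ (tendsto_neg_atBot_atTop.comp Real.tendsto_log_nhdsGT_zero)
    refine tendsto_atTop_mono' _ ?_ hl
    filter_upwards [self_mem_nhdsWithin] with t ht
    have ht : 0 < t := ht
    rw [hδ₁]
    have hs : 0 ≤ Real.sqrt (1 - t^2) := Real.sqrt_nonneg _
    have hs1 : Real.sqrt (1 - t^2) ≤ 1 := by
      rw [Real.sqrt_le_one]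
      nlinarith
    rw [Real.log_div (by positivity) ht.ne']
    have := Real.log_nonneg (show 1 ≤ Real.sqrt (1 - t^2) + 1 by linarith)
    linarith
  · have hg : ∀ t : ℝ, t < 1 → HasDerivAt (fun t : ℝ => (1 - t) ^ ((3:ℝ)/2))
        (-((3:ℝ)/2 * Real.sqrt (1 - t))) t := by
      intro t ht
      have h := ((hasDerivAt_id t).const_sub 1).rpow_const (p := (3:ℝ)/2)
        (Or.inl (by simp only [id]; linarith))
      refine h.congr_deriv ?_
      rw [Real.sqrt_eq_rpow]
      norm_num
    refine HasDerivAt.lhopital_zero_nhdsLT (f' := fun t => -(Real.sqrt (1 - t^2) / t))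
      (g' := fun t => -((3:ℝ)/2 * Real.sqrt (1 - t))) ?_ ?_ ?_ ?_ ?_ ?_
    · filter_upwards [hmem] with t ht using hd t ht.1 ht.2
    · filter_upwards [hmem] with t ht using hg t ht.2
    · filter_upwards [hmem] with t ht
      have : 0 < Real.sqrt (1 - t) := Real.sqrt_pos.mpr (by linarith [ht.2])
      exact (neg_neg_of_pos (by positivity)).ne
    · have hc : ContinuousAt δ₁ 1 := by
        rw [funext hδ₁]
        have c1 : ContinuousAt (fun t : ℝ => Real.sqrt (1 - t^2)) 1 := by fun_prop
        exact (((c1.add continuousAt_const).div continuousAt_id one_ne_zero).log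
          (by simp)).sub c1
      have := hc.tendsto
      rw [hone] at this
      exact this.mono_left nhdsWithin_le_nhds
    · have hc : ContinuousAt (fun t : ℝ => (1 - t) ^ ((3:ℝ)/2)) 1 :=
        (continuousAt_const.sub continuousAt_id).rpow_const (Or.inr (by norm_num))
      have := hc.tendsto
      simp only [sub_self] at this
      rw [Real.zero_rpow (by norm_num)] at this
      exact this.mono_left nhdsWithin_le_nhds
    · have hc : ContinuousAt (fun t : ℝ => 2 * Real.sqrt (1 + t) / (3 * t)) 1 := by
        apply ContinuousAt.div (by fun_prop) (by fun_prop) (by norm_num)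
      have h2 := hc.tendsto
      norm_num at h2
      refine (h2.mono_left nhdsWithin_le_nhds).congr' ?_
      filter_upwards [hmem] with t ht
      have hp : 0 < 1 - t := by linarith [ht.2]
      have : 0 < Real.sqrt (1 - t) := Real.sqrt_pos.mpr hp
      have ht0 := ht.1
      rw [show 1 - t^2 = (1 - t) * (1 + t) by ring, Real.sqrt_mul hp.le]
      field_simp
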